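/- arXiv:1805.12345 — 2 statements merged into one kernel-verified Lean document; each statement's English description precedes it below -/
import Mathlib

section
/- Let q be a prime power and n a positive integer with gcd(n,q)=1. Let δ ≥ 2 and r ≥ δ+1 be integers such that (r+δ-1) divides gcd(n, q-1) and gcd(n/(r+δ-1), r+δ-1) = 1. Then there exists a q-ary cyclic code C of length n, dimension k = rn/(r+δ-1) - δ, and minimum distance d = 2δ, such that C has (r,δ)-locality and d = n - k + 1 - (⌈k/r⌉ - 1)(δ - 1) (i.e., C is an optimal (r,δ)-LRC achieving the Singleton-type bound). -/
open Polynomial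
open scoped Classical

/-- Hamming weight of a vector. -/
noncomputable def wt {F : Type*} [Field F] {n : ℕ} (v : Fin n → F) : ℕ :=
  (Finset.univ.filter (fun i => v i ≠ 0)).card

/-- The minimum distance of the code `Cset` is at least `d`. -/
def MinDistGe {F : Type*} [Field F] {n : ℕ} (Cset : Set (Fin n → F)) (d : ℕ) : Prop :=
  ∀ v ∈ Cset, v ≠ 0 → d ≤ wt v

/-- The minimum distance of the code `Cset` is exactly `d`. -/
def MinDistIs {F : Type*} [Field F] {n : ℕ} (Cset : Set (Fin n → F)) (d : ℕ) : Prop :=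
  MinDistGe Cset d ∧ ∃ v ∈ Cset, v ≠ 0 ∧ wt v = d

/-- The code `Cset` has `(r, δ)`-locality: every coordinate `i` lies in a repair set `R`
of size at most `r + δ - 1` such that the code punctured to `R` has minimum distance `≥ δ`. -/
def HasLocality {F : Type*} [Field F] {n : ℕ} (Cset : Set (Fin n → F)) (r δ : ℕ) : Prop :=
  ∀ i : Fin n, ∃ R : Finset (Fin n), i ∈ R ∧ R.card ≤ r + δ - 1 ∧
    ∀ v ∈ Cset, (∃ j ∈ R, v j ≠ 0) → δ ≤ (R.filter (fun j => v j ≠ 0)).card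

/-- A linear code is cyclic if it is closed under the cyclic shift
`(c_0, ..., c_{n-1}) ↦ (c_{n-1}, c_0, ..., c_{n-2})`. -/
def IsCyclic' {F : Type*} [Field F] {n : ℕ} [NeZero n] (C : Submodule F (Fin n → F)) : Prop :=
  ∀ v ∈ C, (fun i : Fin n => v (i - 1)) ∈ C

/-- Singleton-type optimality for an `[n,k,d]` `(r,δ)`-LRC:
`d = n - k + 1 - (⌈k/r⌉ - 1)(δ - 1)`. -/
def IsOptimalParams (n k d r δ : ℕ) : Prop :=
  (d : ℤ) = (n : ℤ) - (k : ℤ) + 1 - (⌈(k : ℚ) / (r : ℚ)⌉ - 1) * ((δ : ℤ) - 1)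

/-!
Arrange the coordinates `i < n = l m`, where `l = r + δ - 1`, by the pair `(i mod m, β ^ i)` with
`β` of order `l`; by the Chinese remainder theorem this is an `m × l` array, in which the cyclic
shift permutes the rows and multiplies the nodes `β ^ i` by `β`. Take the arrays each of whose rows
`v` satisfies the Reed–Solomon checks `∑ i, v i * β ^ (i * j) = 0` for `j < δ - 1` and whose sum of
rows also satisfies them for `j < 2 δ - 1`. The rows are repair sets, since a nonzero row has weight
at least `δ`. If the sum of the rows of a codeword is nonzero, then already the sum has weight at
least `2 δ`; if it is zero, then every nonzero codeword has two nonzero rows. A dependency among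
`2 δ` columns of a Vandermonde matrix, placed in a single row, attains the bound.
-/

section PowerSums

open Finset

variable {R κ : Type*} [CommRing R] {S : Finset κ} {v χ : κ → R} {d : ℕ}

lemma eq_zero_of_sum_mul_pow_eq_zero [IsDomain R] {N : Finset R} {w : R → R}
    (hw : ∀ j < #N, ∑ x ∈ N, w x * x ^ j = 0) {x : R} (hx : x ∈ N) : w x = 0 := by
  have h : (fun k => w (N.equivFin.symm k)) = 0 := by
    refine Matrix.eq_zero_of_forall_pow_sum_mul_pow_eq_zero
      (f := fun k => (N.equivFin.symm k : R))
      (Subtype.val_injective.comp N.equivFin.symm.injective) fun j => ?_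
    rw [← hw j j.2, ← sum_coe_sort N]
    exact Equiv.sum_comp N.equivFin.symm fun y : N => w y * (y : R) ^ (j : ℕ)
  simpa using congrFun h (N.equivFin ⟨x, hx⟩)

lemma lt_card_filter_ne_zero_of_sum_ne_zero [IsDomain R]
    (hv : ∀ j < d, ∑ i ∈ S, v i * χ i ^ j = 0) {x : R} (hx : ∑ i ∈ S with χ i = x, v i ≠ 0) :
    d < #{i ∈ S | v i ≠ 0} := by
  by_contra! hle
  set T := {i ∈ S | v i ≠ 0} with hT
  have hfold {y : R} (hy : y ∈ T.image χ) : ∑ i ∈ T with χ i = y, v i = 0 := by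
    refine eq_zero_of_sum_mul_pow_eq_zero (N := T.image χ)
      (w := fun y => ∑ i ∈ T with χ i = y, v i) (fun j hj => ?_) hy
    calc ∑ y ∈ T.image χ, (∑ i ∈ T with χ i = y, v i) * y ^ j
        = ∑ y ∈ T.image χ, ∑ i ∈ T with χ i = y, v i * χ i ^ j := by
          refine sum_congr rfl fun y _ => ?_
          rw [sum_mul]
          exact sum_congr rfl fun i hi => by rw [(mem_filter.mp hi).2]
      _ = ∑ i ∈ T, v i * χ i ^ j :=
          sum_fiberwise_of_maps_to (fun i hi => mem_image_of_mem χ hi) _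
      _ = ∑ i ∈ S, v i * χ i ^ j :=
          sum_filter_of_ne fun i _ h => left_ne_zero_of_mul h
      _ = 0 := hv j (hj.trans_le (card_image_le.trans hle))
  obtain ⟨i, hi, hvi⟩ := exists_ne_zero_of_sum_ne_zero hx
  obtain ⟨hiS, rfl⟩ := mem_filter.mp hi
  apply hx
  rw [← sum_filter_ne_zero, filter_comm, ← hT]
  exact hfold (mem_image_of_mem χ (mem_filter.mpr ⟨hiS, hvi⟩))

lemma lt_card_filter_ne_zero_of_injOn [IsDomain R] (hχ : Set.InjOn χ S)
    (hv : ∀ j < d, ∑ i ∈ S, v i * χ i ^ j = 0) {i : κ} (hi : i ∈ S) (hvi : v i ≠ 0) :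
    d < #{i ∈ S | v i ≠ 0} := by
  refine lt_card_filter_ne_zero_of_sum_ne_zero hv (x := χ i) ?_
  have hfibre : {k ∈ S | χ k = χ i} = {i} := by
    ext k
    simp only [mem_filter, mem_singleton]
    exact ⟨fun h => hχ h.1 hi h.2, by rintro rfl; exact ⟨hi, rfl⟩⟩
  rwa [hfibre, sum_singleton]

lemma eq_zero_of_forall_sum_mul_pow_eq_zero [IsDomain R] (hχ : Set.InjOn χ S) (hd : d ≤ #S)
    {g : Fin d → R} (hg : ∀ i ∈ S, ∑ j, g j * χ i ^ (j : ℕ) = 0) : g = 0 := by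
  obtain ⟨T, hTS, rfl⟩ := exists_subset_card_eq hd
  exact Matrix.eq_zero_of_forall_index_sum_mul_pow_eq_zero
    (f := fun k => χ (T.equivFin.symm k))
    ((hχ.mono hTS).injective.comp T.equivFin.symm.injective)
    fun k => hg _ (hTS (T.equivFin.symm k).2)

lemma exists_ne_zero_sum_mul_pow_eq_zero [Nontrivial R] (χ : κ → R) (hd : d < #S) :
    ∃ v : κ → R, v ≠ 0 ∧ (∀ i ∉ S, v i = 0) ∧ ∀ j < d, ∑ i ∈ S, v i * χ i ^ j = 0 := by
  have hdep : ¬LinearIndepOn R (fun i (j : Fin d) => χ i ^ (j : ℕ)) (S : Set κ) := fun h => by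
    have hcard := LinearIndependent.fintype_card_le_finrank h
    simp only [SetLike.coe_sort_coe, Fintype.card_coe, Module.finrank_fintype_fun_eq_card,
      Fintype.card_fin] at hcard
    omega
  obtain ⟨f, hf, i, hi, hfi⟩ := not_linearIndepOn_finset_iff.mp hdep
  refine ⟨fun k => if k ∈ S then f k else 0, ?_, fun k hk => if_neg hk, fun j hj => ?_⟩
  · exact Function.ne_iff.mpr ⟨i, by simpa [hi] using hfi⟩
  · have hsum : ∑ k ∈ S, f k * χ k ^ j = 0 := by simpa using congrFun hf ⟨j, hj⟩
    rw [← hsum]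
    exact sum_congr rfl fun k hk => by simp only [if_pos hk]

end PowerSums

section FibrePowerCode

open Finset

lemma injOn_fibre {κ ι α : Type*} [Fintype κ] [DecidableEq ι] {ρ : κ → ι} {χ : κ → α}
    (hinj : Function.Injective fun i => (ρ i, χ i)) (a : ι) :
    Set.InjOn χ ({i | ρ i = a} : Finset κ) := by
  intro i hi j hj h
  simp only [coe_filter, mem_univ, true_and, Set.mem_ofPred_eq] at hi hj
  exact hinj (Prod.ext (hi.trans hj.symm) h)

/-- The parity-check matrix with the power-sum checks of exponents `j < s` on each fibre of `ρ` and
those of exponents `s ≤ j < s + t` on the set of all coordinates. -/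
def fibrePowerCheck {F κ ι : Type*} [Field F] [DecidableEq ι] (ρ : κ → ι) (χ : κ → F) (s t : ℕ) :
    Matrix ((ι × Fin s) ⊕ Fin t) κ F
  | .inl (a, j), i => if ρ i = a then χ i ^ (j : ℕ) else 0
  | .inr j, i => χ i ^ (s + j : ℕ)

/-- The linear code with parity-check matrix `fibrePowerCheck ρ χ s t`. Its words restrict on each
fibre of `ρ` to words of a Reed–Solomon code with nodes `χ` and `s` checks. -/
def fibrePowerCode {F κ ι : Type*} [Field F] [Fintype κ] [DecidableEq ι] (ρ : κ → ι) (χ : κ → F)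
    (s t : ℕ) : Submodule F (κ → F) :=
  LinearMap.ker (fibrePowerCheck ρ χ s t).mulVecLin

variable {F κ ι : Type*} [Field F] [Fintype κ] [DecidableEq ι] {ρ : κ → ι} {χ : κ → F} {s t : ℕ}
  {v : κ → F}

lemma mem_fibrePowerCode :
    v ∈ fibrePowerCode ρ χ s t ↔
      (∀ a, ∀ j < s, ∑ i with ρ i = a, v i * χ i ^ j = 0) ∧
        ∀ j < s + t, ∑ i, v i * χ i ^ j = 0 := by
  have hchecks : v ∈ fibrePowerCode ρ χ s t ↔
      (∀ a, ∀ j < s, ∑ i with ρ i = a, v i * χ i ^ j = 0) ∧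
        ∀ j < t, ∑ i, v i * χ i ^ (s + j) = 0 := by
    simp only [fibrePowerCode, LinearMap.mem_ker, Matrix.mulVecLin_apply, funext_iff, Sum.forall,
      Prod.forall, Fin.forall_iff, Matrix.mulVec, dotProduct, fibrePowerCheck,
      Pi.zero_apply, mul_ite, mul_zero, sum_filter, mul_comm]
  rw [hchecks]
  refine and_congr_right fun hrow => ⟨fun h j hj => ?_, fun h j hj => h _ (by omega)⟩
  rcases lt_or_ge j s with hjs | hsj
  · rw [← sum_fiberwise_of_maps_to (g := ρ) (t := univ.image ρ) (by simp)]
    exact sum_eq_zero fun a _ => hrow a j hjs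
  · obtain ⟨k, rfl⟩ := Nat.exists_eq_add_of_le hsj
    exact h k (by omega)

lemma lt_card_fibre_of_mem_fibrePowerCode (hinj : Function.Injective fun i => (ρ i, χ i))
    (hv : v ∈ fibrePowerCode ρ χ s t) {i : κ} (hi : v i ≠ 0) :
    s < #{k ∈ {k | ρ k = ρ i} | v k ≠ 0} :=
  lt_card_filter_ne_zero_of_injOn (injOn_fibre hinj _) ((mem_fibrePowerCode.mp hv).1 _)
    (by simp) hi

lemma two_mul_le_hammingNorm_of_mem_fibrePowerCode
    (hinj : Function.Injective fun i => (ρ i, χ i)) (hv : v ∈ fibrePowerCode ρ χ s t) {i k : κ}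
    (hik : ρ i ≠ ρ k) (hi : v i ≠ 0) (hk : v k ≠ 0) : 2 * (s + 1) ≤ hammingNorm v := by
  have hdisj : Disjoint ({j | ρ j = ρ i} : Finset κ) ({j | ρ j = ρ k} : Finset κ) :=
    disjoint_filter.mpr fun _ _ h h' => hik (h.symm.trans h')
  calc 2 * (s + 1)
      ≤ #{j ∈ {j | ρ j = ρ i} | v j ≠ 0} + #{j ∈ {j | ρ j = ρ k} | v j ≠ 0} := by
        have := lt_card_fibre_of_mem_fibrePowerCode hinj hv hi
        have := lt_card_fibre_of_mem_fibrePowerCode hinj hv hk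
        omega
    _ ≤ hammingNorm v := by
        rw [← card_union_of_disjoint (disjoint_filter_filter hdisj), ← filter_union]
        exact card_le_card (filter_subset_filter _ (subset_univ _))

lemma min_le_hammingNorm_of_mem_fibrePowerCode (hinj : Function.Injective fun i => (ρ i, χ i))
    (hv : v ∈ fibrePowerCode ρ χ s t) (hne : v ≠ 0) :
    min (2 * (s + 1)) (s + t + 1) ≤ hammingNorm v := by
  by_cases hfold : ∃ x, ∑ i with χ i = x, v i ≠ 0
  · obtain ⟨x, hx⟩ := hfold
    exact min_le_of_right_le <|
      lt_card_filter_ne_zero_of_sum_ne_zero (mem_fibrePowerCode.mp hv).2 hx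
  · push Not at hfold
    obtain ⟨i, hi⟩ : ∃ i, v i ≠ 0 := Function.ne_iff.mp hne
    obtain ⟨k, hχk, hki, hk⟩ : ∃ k, χ k = χ i ∧ k ≠ i ∧ v k ≠ 0 := by
      by_contra! hcon
      apply hi
      rw [← hfold (χ i), sum_eq_single_of_mem i (by simp)]
      exact fun k hk hki => hcon k (mem_filter.mp hk).2 hki
    have hρ : ρ k ≠ ρ i := fun h => hki (hinj (Prod.ext h hχk))
    exact min_le_of_left_le (two_mul_le_hammingNorm_of_mem_fibrePowerCode hinj hv hρ hk hi)

lemma exists_mem_fibrePowerCode_hammingNorm_le {a : ι} (ha : s + t < #{i | ρ i = a}) :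
    ∃ v ∈ fibrePowerCode ρ χ s t, v ≠ 0 ∧ hammingNorm v ≤ s + t + 1 := by
  obtain ⟨T, hTa, hT⟩ := exists_subset_card_eq (Nat.succ_le_of_lt ha)
  obtain ⟨v, hne, hout, hpow⟩ :=
    exists_ne_zero_sum_mul_pow_eq_zero χ (hT.symm ▸ Nat.lt_succ_self (s + t))
  have hsum {U : Finset κ} (hU : T ⊆ U) {j : ℕ} (hj : j < s + t) :
      ∑ i ∈ U, v i * χ i ^ j = 0 := by
    rw [← hpow j hj]
    exact (sum_subset hU fun i _ hi => by rw [hout i hi, zero_mul]).symm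
  refine ⟨v, mem_fibrePowerCode.mpr ⟨fun b j hj => ?_, fun j => hsum (subset_univ _)⟩, hne, ?_⟩
  · obtain rfl | hb := eq_or_ne b a
    · exact hsum hTa (by omega)
    · refine sum_eq_zero fun i hi => ?_
      have hiT : i ∉ T := fun h =>
        hb ((mem_filter.mp hi).2.symm.trans (mem_filter.mp (hTa h)).2)
      rw [hout i hiT, zero_mul]
  · have hsupp : ({i | v i ≠ 0} : Finset κ) ⊆ T := fun i hi =>
      by_contra fun h => (mem_filter.mp hi).2 (hout i h)
    exact (card_le_card hsupp).trans hT.le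

/-- Restricted to a single fibre, the rows of `fibrePowerCheck` that do not vanish there form a
Vandermonde matrix. -/
lemma linearIndependent_fibrePowerCheck_row [Finite ι] [Nonempty ι]
    (hinj : Function.Injective fun i => (ρ i, χ i)) (hcard : ∀ a, s + t ≤ #{i | ρ i = a}) :
    LinearIndependent F (fibrePowerCheck ρ χ s t).row := by
  cases nonempty_fintype ι
  rw [Fintype.linearIndependent_iff]
  intro g hg
  have hcoeff (a : ι) :
      Fin.append (fun j : Fin s => g (.inl (a, j))) (fun j : Fin t => g (.inr j)) = 0 := by
    refine eq_zero_of_forall_sum_mul_pow_eq_zero (injOn_fibre hinj a) (hcard a) fun i hi => ?_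
    have hgi := congrFun hg i
    simp only [Fintype.sum_sum_type, Fintype.sum_prod_type, Finset.sum_apply, Pi.smul_apply,
      smul_eq_mul, fibrePowerCheck, Matrix.row, (mem_filter.mp hi).2, Pi.zero_apply] at hgi
    rw [Fintype.sum_eq_single a fun b hb => by simp [hb.symm]] at hgi
    simpa [Fin.sum_univ_add] using hgi
  rintro (⟨a, j⟩ | j)
  · simpa using congrFun (hcoeff a) (Fin.castAdd _ j)
  · simpa using congrFun (hcoeff (Classical.arbitrary ι)) (Fin.natAdd _ j)

lemma finrank_fibrePowerCode [Fintype ι] [Nonempty ι]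
    (hinj : Function.Injective fun i => (ρ i, χ i)) (hcard : ∀ a, s + t ≤ #{i | ρ i = a}) :
    Module.finrank F (fibrePowerCode ρ χ s t) =
      Fintype.card κ - (Fintype.card ι * s + t) := by
  have hrank : Module.finrank F (LinearMap.range (fibrePowerCheck ρ χ s t).mulVecLin) =
      Fintype.card ι * s + t := by
    simpa [Matrix.rank] using (linearIndependent_fibrePowerCheck_row hinj hcard).rank_matrix
  have hnullity := (fibrePowerCheck ρ χ s t).mulVecLin.finrank_range_add_finrank_ker
  rw [hrank, Module.finrank_fintype_fun_eq_card] at hnullity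
  rw [fibrePowerCode]
  omega

lemma comp_symm_mem_fibrePowerCode (σ : Equiv.Perm κ) (τ : Equiv.Perm ι) (β : F)
    (hρ : ∀ i, ρ (σ i) = τ (ρ i)) (hχ : ∀ i, χ (σ i) = β * χ i)
    (hv : v ∈ fibrePowerCode ρ χ s t) : v ∘ σ.symm ∈ fibrePowerCode ρ χ s t := by
  have hterm (i : κ) (j : ℕ) :
      (v ∘ σ.symm) (σ i) * χ (σ i) ^ j = β ^ j * (v i * χ i ^ j) := by
    rw [Function.comp_apply, σ.symm_apply_apply, hχ]
    ring
  rw [mem_fibrePowerCode] at hv ⊢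
  refine ⟨fun a j hj => ?_, fun j hj => ?_⟩
  · rw [sum_filter, ← Equiv.sum_comp σ]
    simp only [hterm, hρ, ← Equiv.eq_symm_apply]
    rw [← sum_filter, ← mul_sum, hv.1 _ j hj, mul_zero]
  · rw [← Equiv.sum_comp σ]
    simp only [hterm]
    rw [← mul_sum, hv.2 j hj, mul_zero]

end FibrePowerCode

section CyclicLRC

open Finset

/-- The `fibrePowerCode` of length `n` in which coordinate `i` lies in the fibre `i mod m` and has
the node `β ^ i`. -/
def cyclicLRC {F : Type*} [Field F] (n m : ℕ) (β : F) (s t : ℕ) : Submodule F (Fin n → F) :=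
  fibrePowerCode (fun i : Fin n => ((i : ℕ) : ZMod m)) (fun i : Fin n => β ^ (i : ℕ)) s t

lemma wt_eq_hammingNorm {F : Type*} [Field F] {n : ℕ} (v : Fin n → F) : wt v = hammingNorm v :=
  rfl

lemma val_add_one_modEq {n : ℕ} [NeZero n] (i : Fin n) : ((i + 1 : Fin n) : ℕ) ≡ i + 1 [MOD n] := by
  rw [Fin.val_add, Fin.val_one', Nat.add_mod_mod]
  exact Nat.mod_modEq _ _

lemma card_fibre_natCast_zmod (l m : ℕ) [NeZero m] (a : ZMod m) :
    #{i : Fin (l * m) | ((i : ℕ) : ZMod m) = a} = l := by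
  calc #{i : Fin (l * m) | ((i : ℕ) : ZMod m) = a}
      = #{x ∈ range (l * m) | x ≡ a.val [MOD m]} := by
        simp only [card_filter, ← ZMod.natCast_eq_natCast_iff, ZMod.natCast_zmod_val]
        exact Fin.sum_univ_eq_sum_range (fun x => if (x : ZMod m) = a then 1 else 0) _
    _ = l := by
        rw [← Nat.count_eq_card_filter_range, Nat.count_modEq_card _ (NeZero.pos m)]
        simp [NeZero.pos m]

variable {F : Type*} [Field F] {β : F} {l m n s t : ℕ}

lemma injective_natCast_zmod_pow (hβ : IsPrimitiveRoot β l) (hlm : l.Coprime m) :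
    Function.Injective fun i : Fin (l * m) => (((i : ℕ) : ZMod m), β ^ (i : ℕ)) := by
  intro i j h
  obtain ⟨hres, hpow⟩ := Prod.ext_iff.mp h
  have hl : l ≠ 0 := by
    rintro rfl
    exact absurd i.2 (by simp)
  have hmodl : (i : ℕ) ≡ j [MOD l] := by
    have h := (hβ.isOfFinOrder hl).pow_inj_mod.mp hpow
    rwa [← hβ.eq_orderOf] at h
  have hmodm : (i : ℕ) ≡ j [MOD m] := (ZMod.natCast_eq_natCast_iff _ _ _).mp hres
  exact Fin.ext <|
    ((Nat.modEq_and_modEq_iff_modEq_mul hlm).mp ⟨hmodl, hmodm⟩).eq_of_lt_of_lt i.2 j.2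

lemma isCyclic'_cyclicLRC [NeZero n] (hmn : m ∣ n) (hβ : β ^ n = 1) :
    IsCyclic' (cyclicLRC n m β s t) := by
  intro v hv
  have hshift : (fun i : Fin n => v (i - 1)) = v ∘ (Equiv.addRight (1 : Fin n)).symm := by
    ext i
    simp [sub_eq_add_neg]
  rw [hshift]
  refine comp_symm_mem_fibrePowerCode (Equiv.addRight (1 : Fin n)) (Equiv.addRight (1 : ZMod m)) β
    (fun i => ?_) (fun i => ?_) hv
  · simpa using (ZMod.natCast_eq_natCast_iff _ _ _).mpr ((val_add_one_modEq i).of_dvd hmn)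
  · simpa [pow_succ'] using pow_eq_pow_of_modEq (val_add_one_modEq i) hβ

lemma finrank_cyclicLRC [NeZero m] (hβ : IsPrimitiveRoot β l) (hlm : l.Coprime m)
    (hst : s + t ≤ l) : Module.finrank F (cyclicLRC (l * m) m β s t) = l * m - (m * s + t) := by
  have hcard (a : ZMod m) := hst.trans_eq (card_fibre_natCast_zmod l m a).symm
  rw [cyclicLRC, finrank_fibrePowerCode (injective_natCast_zmod_pow hβ hlm) hcard,
    Fintype.card_fin, ZMod.card]

lemma minDistIs_cyclicLRC [NeZero m] (hβ : IsPrimitiveRoot β l) (hlm : l.Coprime m)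
    (hst : s + t < l) (hts : t ≤ s + 1) :
    MinDistIs (cyclicLRC (l * m) m β s t : Set (Fin (l * m) → F)) (s + t + 1) := by
  have hge : MinDistGe (cyclicLRC (l * m) m β s t : Set (Fin (l * m) → F)) (s + t + 1) := by
    intro v hv hne
    rw [wt_eq_hammingNorm]
    have := min_le_hammingNorm_of_mem_fibrePowerCode (injective_natCast_zmod_pow hβ hlm) hv hne
    omega
  obtain ⟨v, hv, hne, hle⟩ := exists_mem_fibrePowerCode_hammingNorm_le
    (χ := fun i : Fin (l * m) => β ^ (i : ℕ))
    (hst.trans_eq (card_fibre_natCast_zmod l m (0 : ZMod m)).symm)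
  exact ⟨hge, v, hv, hne, hle.antisymm (hge v hv hne)⟩

lemma hasLocality_cyclicLRC [NeZero m] (hβ : IsPrimitiveRoot β l) (hlm : l.Coprime m) {r : ℕ}
    (hl : l ≤ r + s) :
    HasLocality (cyclicLRC (l * m) m β s t : Set (Fin (l * m) → F)) r (s + 1) := by
  intro i
  refine ⟨({k : Fin (l * m) | ((k : ℕ) : ZMod m) = (i : ℕ)} : Finset (Fin (l * m))), by simp,
    (card_fibre_natCast_zmod l m _).le.trans hl, ?_⟩
  rintro v hv ⟨k, hk, hvk⟩
  rw [← (mem_filter.mp hk).2]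
  exact lt_card_fibre_of_mem_fibrePowerCode (injective_natCast_zmod_pow hβ hlm) hv hvk

end CyclicLRC

lemma isOptimalParams_two_mul_succ {m r s : ℕ} (hm : 0 < m) (hr : s + 1 < r) :
    IsOptimalParams ((r + s) * m) (r * m - (s + 1)) (2 * (s + 1)) r (s + 1) := by
  have hle : s + 1 ≤ r * m := by nlinarith
  have hr0 : (0 : ℚ) < r := by exact_mod_cast (by omega : 0 < r)
  have hsr : (s : ℚ) + 1 < r := by exact_mod_cast hr
  have hceil : ⌈((r * m - (s + 1) : ℕ) : ℚ) / (r : ℚ)⌉ = (m : ℤ) := by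
    rw [Int.ceil_eq_iff, lt_div_iff₀ hr0, div_le_iff₀ hr0]
    push_cast [Nat.cast_sub hle]
    constructor <;> linarith
  rw [IsOptimalParams, hceil]
  push_cast [Nat.cast_sub hle]
  ring

lemma exists_isPrimitiveRoot_of_dvd_card_sub_one (F : Type*) [Field F] [Fintype F] {l : ℕ}
    (hl : l ∣ Fintype.card F - 1) : ∃ β : F, IsPrimitiveRoot β l := by
  obtain ⟨g, hg⟩ := IsCyclic.exists_ofOrder_eq_natCard (α := Fˣ)
  rw [Nat.card_units, Nat.card_eq_fintype_card] at hg
  have hg' : IsPrimitiveRoot (g : F) (Fintype.card F - 1) :=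
    IsPrimitiveRoot.coe_units_iff.mpr (hg ▸ IsPrimitiveRoot.orderOf g)
  obtain ⟨c, hc⟩ := hl
  exact ⟨_, hg'.pow (Nat.sub_pos_of_lt Fintype.one_lt_card) (hc.trans (mul_comm _ _))⟩

theorem exists_optimal_cyclic_LRC_dist_two_delta_general {F : Type*} [Field F] {n r δ : ℕ}
    [NeZero n] {β : F} (hβ : IsPrimitiveRoot β (r + δ - 1)) (hδ : 1 ≤ δ) (hr : δ + 1 ≤ r)
    (hdvd : (r + δ - 1) ∣ n) (hgcd : Nat.gcd (n / (r + δ - 1)) (r + δ - 1) = 1) :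
    ∃ C : Submodule F (Fin n → F),
      IsCyclic' C ∧
      Module.finrank F C = r * n / (r + δ - 1) - δ ∧
      MinDistIs (C : Set (Fin n → F)) (2 * δ) ∧
      HasLocality (C : Set (Fin n → F)) r δ ∧
      IsOptimalParams n (r * n / (r + δ - 1) - δ) (2 * δ) r δ := by
  obtain ⟨s, rfl⟩ := Nat.exists_eq_add_of_le' hδ
  rw [Nat.add_succ_sub_one] at hβ hdvd hgcd ⊢
  obtain ⟨m, rfl⟩ := hdvd
  have hl : 0 < r + s := by omega
  have hm : NeZero m := ⟨right_ne_zero_of_mul (NeZero.ne ((r + s) * m))⟩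
  have hlm : (r + s).Coprime m := by
    rwa [Nat.mul_div_cancel_left _ hl, Nat.gcd_comm] at hgcd
  have hdim : r * ((r + s) * m) / (r + s) = r * m := by
    rw [mul_left_comm, Nat.mul_div_cancel_left _ hl]
  rw [hdim]
  refine ⟨cyclicLRC ((r + s) * m) m β s (s + 1), isCyclic'_cyclicLRC (Nat.dvd_mul_left _ _) ?_, ?_,
    ?_, hasLocality_cyclicLRC hβ hlm le_rfl, isOptimalParams_two_mul_succ (NeZero.pos m) hr⟩
  · rw [pow_mul, hβ.pow_eq_one, one_pow]
  · rw [finrank_cyclicLRC hβ hlm (by omega), add_mul, mul_comm m s]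
    omega
  · convert minDistIs_cyclicLRC hβ hlm (s := s) (t := s + 1) (by omega) le_rfl using 1
    ring

/-- **Theorem 3 / main result (iii).** If `gcd(n,q) = 1`, `δ ≥ 2`, `r ≥ δ + 1`,
`(r+δ-1) ∣ gcd(n, q-1)` and `gcd(n/(r+δ-1), r+δ-1) = 1`, then there exists a `q`-ary
optimal cyclic `(r,δ)`-LRC of length `n`, dimension `k = rn/(r+δ-1) - δ` and minimum
distance `2δ`, achieving the Singleton-type bound. -/
theorem exists_optimal_cyclic_LRC_dist_two_delta (F : Type*) [Field F] [Fintype F]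
    (q n r δ : ℕ) (hq : Fintype.card F = q) [NeZero n] (hcop : Nat.Coprime n q)
    (hδ : 2 ≤ δ) (hr : δ + 1 ≤ r) (hdvd : (r + δ - 1) ∣ Nat.gcd n (q - 1))
    (hgcd : Nat.gcd (n / (r + δ - 1)) (r + δ - 1) = 1) :
    ∃ C : Submodule F (Fin n → F),
      IsCyclic' C ∧
      Module.finrank F C = r * n / (r + δ - 1) - δ ∧
      MinDistIs (C : Set (Fin n → F)) (2 * δ) ∧
      HasLocality (C : Set (Fin n → F)) r δ ∧
      IsOptimalParams n (r * n / (r + δ - 1) - δ) (2 * δ) r δ := by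
  obtain ⟨β, hβ⟩ := exists_isPrimitiveRoot_of_dvd_card_sub_one F
    (hq ▸ hdvd.trans (Nat.gcd_dvd_right _ _))
  exact exists_optimal_cyclic_LRC_dist_two_delta_general hβ (by omega) hr
    (hdvd.trans (Nat.gcd_dvd_left _ _)) hgcd
end

section
/- Let q be a prime power and n a positive integer with gcd(n,q)=1. Let r ≥ 2 and δ ≥ 2 with (r+δ-1) dividing gcd(n, q-1), and set ρ = n/(r+δ-1). Let ξ be a primitive n-th root of unity in the splitting field of x^n - 1 over F_q, and let α = ξ^ρ (so α ∈ F_q is a primitive (r+δ-1)-th root of unity). Then the polynomial g(x) = (x-1)·∏_{i=1}^{δ-1}(x^ρ - α^i) has coefficients in F_q, divides x^n - 1, and the q-ary cyclic code C of length n with generator polynomial g(x) has dimension rρ - 1, minimum distance exactly δ+1, and (r,δ)-locality. -/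
open Polynomial
open scoped Classical

/-- The polynomial with coefficient vector `v`. -/
noncomputable def vecPoly {F : Type*} [Field F] {n : ℕ} (v : Fin n → F) : F[X] :=
  ∑ i : Fin n, C (v i) * X ^ (i : ℕ)

/-- The `q`-ary cyclic code of length `n` with generator polynomial `g`. -/
noncomputable def cyclicCode (F : Type*) [Field F] (n : ℕ) (g : F[X]) :
    Submodule F (Fin n → F) where
  carrier := {v | g ∣ vecPoly v}
  zero_mem' := by
    show g ∣ vecPoly (0 : Fin n → F)
    simp [vecPoly]
  add_mem' := by
    intro a b ha hb
    have h : vecPoly (a + b) = vecPoly a + vecPoly b := by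
      simp [vecPoly, add_mul, Finset.sum_add_distrib]
    show g ∣ vecPoly (a + b)
    rw [h]; exact dvd_add ha hb
  smul_mem' := by
    intro c v hv
    have h : vecPoly (c • v) = C c * vecPoly v := by
      simp [vecPoly, Finset.mul_sum, mul_assoc]
    show g ∣ vecPoly (c • v)
    rw [h]; exact Dvd.dvd.mul_left hv (C c)

/-!
Put `N = r + δ - 1` and write a word of length `n = N * ρ` as an `N × ρ` array whose columns are
the residue classes of positions modulo `ρ`. If `X ^ ρ - α ^ i` divides the word, then each of its
columns, read as a polynomial, vanishes at `α ^ i`. So the columns of a codeword have `δ - 1`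
consecutive zeros, and the BCH bound gives every nonzero column weight at least `δ`, which is the
locality. If two columns are nonzero, the weight is at least `2δ`; if only one is, the factor
`X - 1` makes it vanish at `α ^ 0` as well, so its weight is at least `δ + 1`. The word
`∏_{i < δ} (X ^ ρ - α ^ i)` attains this bound.
-/

theorem lt_card_support_of_sum_mul_pow_eq_zero {ι R : Type*} [Fintype ι] [CommRing R] [IsDomain R]
    {x c : ι → R} (hx : Function.Injective x) (hc : c ≠ 0) {d : ℕ}
    (h : ∀ j < d, ∑ i, c i * x i ^ j = 0) : d < (Finset.univ.filter fun i => c i ≠ 0).card := by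
  by_contra! hd
  set S := Finset.univ.filter fun i => c i ≠ 0
  let e := S.equivFin.symm
  have sum_eq_zero (j : Fin S.card) : ∑ m, c (e m) * x (e m) ^ (j : ℕ) = 0 := by
    rw [e.sum_comp fun i => c i * x i ^ (j : ℕ), Finset.sum_coe_sort S fun i => c i * x i ^ (j : ℕ),
      ← h j (j.2.trans_le hd)]
    exact Finset.sum_subset S.subset_univ fun i _ hi => by simp_all [S]
  have hce := Matrix.eq_zero_of_forall_pow_sum_mul_pow_eq_zero
    (hx.comp (Subtype.val_injective.comp e.injective)) sum_eq_zero
  obtain ⟨s, hs⟩ := Function.ne_iff.mp hc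
  have hsS : s ∈ S := by simpa [S] using hs
  exact hs (by simpa using congrFun hce (e.symm ⟨s, hsS⟩))

theorem X_pow_sub_C_dvd_expand_sub_C_eval {R : Type*} [CommRing R] (ρ : ℕ) (b : R) (p : R[X]) :
    X ^ ρ - C b ∣ expand R ρ p - C (p.eval b) := by
  simpa using map_dvd (expand R ρ) (X_sub_C_dvd_sub_C_eval (a := b) (p := p))

theorem card_support_expand_le {R : Type*} [CommSemiring R] {ρ : ℕ} (hρ : 0 < ρ) (p : R[X]) :
    (expand R ρ p).support.card ≤ p.support.card := by
  refine Finset.card_le_card_of_injOn (· / ρ) ?_ ?_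
  · intro i hi
    simp_all [coeff_expand hρ]
  · intro i hi j hj hij
    simp only [Finset.mem_coe, mem_support_iff, coeff_expand hρ, ne_eq, ite_eq_right_iff,
      Classical.not_imp] at hi hj
    exact (Nat.div_left_inj hi.1 hj.1).mp hij

theorem prod_X_sub_C_pow_dvd_X_pow_sub_one {R : Type*} [CommRing R] [IsDomain R] {N d : ℕ} {α : R}
    (hα : IsPrimitiveRoot α N) (hd : d ≤ N) :
    ∏ i ∈ Finset.range d, (X - C (α ^ i)) ∣ (X ^ N - 1 : R[X]) := by
  obtain rfl | hN := N.eq_zero_or_pos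
  · simp
  · have hfactor := X_pow_sub_C_eq_prod hα hN (one_pow N)
    simp only [mul_one, C_1] at hfactor
    rw [hfactor]
    exact Finset.prod_dvd_prod_of_subset _ _ _ (Finset.range_mono hd)

section

variable {F : Type*} [Field F]

theorem vecPoly_eq_degreeLTEquiv_symm {n : ℕ} (v : Fin n → F) :
    vecPoly v = (degreeLTEquiv F n).symm v := by
  simp [vecPoly, degreeLTEquiv, C_mul_X_pow_eq_monomial]

theorem degree_vecPoly_lt {n : ℕ} (v : Fin n → F) : (vecPoly v).degree < n := by
  rw [vecPoly_eq_degreeLTEquiv_symm]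
  exact mem_degreeLT.mp (Subtype.prop _)

theorem vecPoly_eq_zero_iff {n : ℕ} {v : Fin n → F} : vecPoly v = 0 ↔ v = 0 := by
  simp [vecPoly_eq_degreeLTEquiv_symm]

theorem vecPoly_coeff_of_degree_lt {n : ℕ} {p : F[X]} (hp : p.degree < n) :
    vecPoly (fun i : Fin n => p.coeff i) = p := by
  rw [vecPoly_eq_degreeLTEquiv_symm]
  exact congrArg Subtype.val
    ((degreeLTEquiv F n).symm_apply_apply ⟨p, mem_degreeLT.mpr hp⟩)

theorem eval_vecPoly {n : ℕ} (v : Fin n → F) (x : F) :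
    (vecPoly v).eval x = ∑ i : Fin n, v i * x ^ (i : ℕ) := by
  simp [vecPoly, eval_finsetSum]

theorem finrank_cyclicCode {g : F[X]} (hg : g ≠ 0) (k : ℕ) :
    Module.finrank F (cyclicCode F (g.natDegree + k) g) = k := by
  set n := g.natDegree + k
  have degree_mul_lt_iff (p : F[X]) : (g * p).degree < n ↔ p.degree < k := by
    rw [degree_mul, degree_eq_natDegree hg, Nat.cast_add]
    exact WithBot.add_lt_add_iff_left (by simp)
  let toPoly : (Fin n → F) →ₗ[F] F[X] :=
    (degreeLT F n).subtype ∘ₗ (degreeLTEquiv F n).symm.toLinearMap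
  have toPoly_injective : Function.Injective toPoly :=
    Subtype.val_injective.comp (degreeLTEquiv F n).symm.injective
  have mul_injective : Function.Injective (LinearMap.mulLeft F g) :=
    mul_right_injective₀ hg
  have map_eq : (cyclicCode F n g).map toPoly = (degreeLT F k).map (LinearMap.mulLeft F g) := by
    ext p
    constructor
    · rintro ⟨v, ⟨h, hv⟩, rfl⟩
      have hdeg := degree_vecPoly_lt v
      rw [hv, degree_mul_lt_iff] at hdeg
      exact ⟨h, mem_degreeLT.mpr hdeg, hv.symm.trans (vecPoly_eq_degreeLTEquiv_symm v)⟩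
    · rintro ⟨h, hdeg, rfl⟩
      have hvec := vecPoly_coeff_of_degree_lt ((degree_mul_lt_iff h).mpr (mem_degreeLT.mp hdeg))
      exact ⟨_, ⟨h, hvec⟩, (vecPoly_eq_degreeLTEquiv_symm _).symm.trans hvec⟩
  rw [((cyclicCode F n g).equivMapOfInjective toPoly toPoly_injective).finrank_eq, map_eq,
    ← ((degreeLT F k).equivMapOfInjective _ mul_injective).finrank_eq,
    (degreeLTEquiv F k).finrank_eq, Module.finrank_fin_fun]

theorem lt_wt_of_eval_pow_eq_zero {N s d : ℕ} {β : F} (hβ : IsPrimitiveRoot β N)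
    {v : Fin N → F} (hv : v ≠ 0) (h : ∀ j < d, (vecPoly v).eval (β ^ (s + j)) = 0) : d < wt v := by
  obtain ⟨i₀, -⟩ := Function.ne_iff.mp hv
  have hβ0 : β ≠ 0 := hβ.ne_zero i₀.pos.ne'
  let c : Fin N → F := fun i => v i * (β ^ (i : ℕ)) ^ s
  have c_ne_zero_iff (i : Fin N) : c i ≠ 0 ↔ v i ≠ 0 := by simp [c, hβ0]
  have hsum (j : ℕ) (hj : j < d) : ∑ i, c i * (β ^ (i : ℕ)) ^ j = 0 := by
    rw [← h j hj, eval_vecPoly]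
    exact Finset.sum_congr rfl fun i _ => by simp only [c]; ring
  have hlt := lt_card_support_of_sum_mul_pow_eq_zero
    (fun i j hij => Fin.ext (hβ.pow_inj i.2 j.2 hij))
    (Function.ne_iff.mpr ((Function.ne_iff.mp hv).imp fun i => (c_ne_zero_iff i).mpr)) hsum
  simpa only [c_ne_zero_iff, wt] using hlt

/-- The column `a` of a word of length `N * ρ` written row by row into an `N × ρ` array: its
entries at the positions congruent to `a` modulo `ρ`. -/
def column {A : Type*} {N ρ : ℕ} (v : Fin (N * ρ) → A) (a : Fin ρ) : Fin N → A :=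
  fun m => v (finProdFinEquiv (m, a))

theorem exists_column_ne_zero {A : Type*} [Zero A] {N ρ : ℕ} {v : Fin (N * ρ) → A} (hv : v ≠ 0) :
    ∃ a, column v a ≠ 0 := by
  obtain ⟨i, hi⟩ := Function.ne_iff.mp hv
  obtain ⟨⟨m, a⟩, rfl⟩ := finProdFinEquiv.surjective i
  exact ⟨a, Function.ne_iff.mpr ⟨m, hi⟩⟩

theorem wt_eq_sum_wt_column {N ρ : ℕ} (v : Fin (N * ρ) → F) : wt v = ∑ a, wt (column v a) := by
  rw [wt, Finset.card_filter, ← finProdFinEquiv.sum_comp, Fintype.sum_prod_type_right]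
  exact Finset.sum_congr rfl fun a _ => (Finset.card_filter _ _).symm

theorem vecPoly_eq_sum_column {N ρ : ℕ} (v : Fin (N * ρ) → F) :
    vecPoly v = ∑ a : Fin ρ, expand F ρ (vecPoly (column v a)) * X ^ (a : ℕ) := by
  rw [vecPoly, ← finProdFinEquiv.sum_comp, Fintype.sum_prod_type_right]
  refine Finset.sum_congr rfl fun a _ => ?_
  simp only [vecPoly, column, map_sum, map_mul, map_pow, expand_C, expand_X, Finset.sum_mul,
    finProdFinEquiv_apply_val, pow_add, pow_mul]
  exact Finset.sum_congr rfl fun m _ => by ring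

theorem eval_vecPoly_column_eq_zero {N ρ : ℕ} {v : Fin (N * ρ) → F} {b : F}
    (h : X ^ ρ - C b ∣ vecPoly v) (a : Fin ρ) : (vecPoly (column v a)).eval b = 0 := by
  let remainder : Fin ρ → F := fun a => (vecPoly (column v a)).eval b
  have hdiff : X ^ ρ - C b ∣ vecPoly v - vecPoly remainder := by
    rw [vecPoly_eq_sum_column v, vecPoly, ← Finset.sum_sub_distrib]
    exact Finset.dvd_sum fun a _ => by
      rw [← sub_mul]
      exact (X_pow_sub_C_dvd_expand_sub_C_eval ρ b _).mul_right _
  have hremainder : vecPoly remainder = 0 := by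
    refine eq_zero_of_dvd_of_degree_lt ((dvd_sub_right h).mp hdiff) ?_
    rw [degree_X_pow_sub_C a.pos]
    exact degree_vecPoly_lt remainder
  exact congrFun (vecPoly_eq_zero_iff.mp hremainder) a

theorem hasLocality_of_le_wt_column {N ρ r δ : ℕ} {S : Set (Fin (N * ρ) → F)}
    (hN : N ≤ r + δ - 1)
    (h : ∀ v ∈ S, ∀ a, column v a ≠ 0 → δ ≤ wt (column v a)) : HasLocality S r δ := by
  intro i
  obtain ⟨⟨m, a⟩, rfl⟩ := finProdFinEquiv.surjective i
  let e : Fin N ↪ Fin (N * ρ) :=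
    ⟨fun m => finProdFinEquiv (m, a), fun m m' h => by simpa using h⟩
  refine ⟨Finset.univ.map e, Finset.mem_map_of_mem e (Finset.mem_univ m), by simpa using hN, ?_⟩
  rintro v hv ⟨j, hj, hvj⟩
  obtain ⟨m', -, rfl⟩ := Finset.mem_map.mp hj
  rw [Finset.filter_map, Finset.card_map]
  exact h v hv a (Function.ne_iff.mpr ⟨m', hvj⟩)

theorem wt_coeff_le_card_support (n : ℕ) (p : F[X]) :
    wt (fun i : Fin n => p.coeff i) ≤ p.support.card :=
  Finset.card_le_card_of_injOn Fin.val (fun i hi => by simpa using hi) Fin.val_injective.injOn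

end

/-- The generator polynomial `(x - 1) ∏_{i = 1}^{δ - 1} (x ^ ρ - α ^ i)` of the locally recoverable
code of Theorem 1. It is defined over any ring containing `α`, so that it can be moved between the
field of the code and an extension of it. -/
noncomputable def lrcGenerator {R : Type*} [CommRing R] (α : R) (ρ δ : ℕ) : R[X] :=
  (X - 1) * ∏ i ∈ Finset.Icc 1 (δ - 1), (X ^ ρ - C (α ^ i))

theorem map_lrcGenerator {R S : Type*} [CommRing R] [CommRing S] (f : R →+* S) (α : R) (ρ δ : ℕ) :
    (lrcGenerator α ρ δ).map f = lrcGenerator (f α) ρ δ := by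
  simp [lrcGenerator, Polynomial.map_prod]

section

variable {R : Type*} [CommRing R] (α : R) {ρ δ : ℕ}

theorem monic_lrcGenerator (hρ : 0 < ρ) : (lrcGenerator α ρ δ).Monic :=
  (monic_X_sub_C (1 : R)).mul (monic_prod_of_monic _ _ fun _ _ => monic_X_pow_sub_C _ hρ.ne')

theorem natDegree_lrcGenerator [Nontrivial R] (hρ : 0 < ρ) :
    (lrcGenerator α ρ δ).natDegree = 1 + (δ - 1) * ρ := by
  have hmonic (i : ℕ) : (X ^ ρ - C (α ^ i) : R[X]).Monic := monic_X_pow_sub_C _ hρ.ne'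
  rw [lrcGenerator, ← C_1,
    (monic_X_sub_C 1).natDegree_mul (monic_prod_of_monic _ _ fun i _ => hmonic i),
    natDegree_prod_of_monic _ _ fun i _ => hmonic i]
  simp only [natDegree_X_sub_C, natDegree_X_pow_sub_C, Finset.sum_const, Nat.card_Icc,
    Nat.add_sub_cancel, smul_eq_mul]

theorem X_pow_sub_C_pow_dvd_lrcGenerator {i : ℕ} (hi : 0 < i) (hiδ : i < δ) :
    X ^ ρ - C (α ^ i) ∣ lrcGenerator α ρ δ :=
  (Finset.dvd_prod_of_mem _ (Finset.mem_Icc.mpr ⟨hi, Nat.le_sub_one_of_lt hiδ⟩)).mul_left _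

theorem lrcGenerator_dvd_expand_prod (ρ : ℕ) (hδ : 0 < δ) :
    lrcGenerator α ρ δ ∣ expand R ρ (∏ i ∈ Finset.range δ, (X - C (α ^ i))) := by
  simp only [map_prod, map_sub, expand_X, expand_C]
  rw [Finset.range_eq_Ico, Finset.prod_eq_prod_Ico_succ_bot hδ, pow_zero, C_1]
  exact mul_dvd_mul (by simpa using sub_dvd_pow_sub_pow (X : R[X]) 1 ρ) dvd_rfl

theorem lrcGenerator_dvd_X_pow_sub_one [IsDomain R] {N : ℕ} (hα : IsPrimitiveRoot α N) (ρ : ℕ)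
    (hδ : 0 < δ) (hδN : δ ≤ N) : lrcGenerator α ρ δ ∣ X ^ (N * ρ) - 1 := by
  have hexpand := map_dvd (expand R ρ) (prod_X_sub_C_pow_dvd_X_pow_sub_one hα hδN)
  refine (lrcGenerator_dvd_expand_prod α ρ hδ).trans (hexpand.trans ?_)
  simp [← pow_mul, mul_comm]

end

section

variable {F : Type*} [Field F] {N ρ δ : ℕ} {α : F}

theorem finrank_cyclicCode_lrcGenerator (hρ : 0 < ρ) {r : ℕ} (hr : 0 < r) (hδ : 0 < δ) :
    Module.finrank F (cyclicCode F ((r + δ - 1) * ρ) (lrcGenerator α ρ δ)) = r * ρ - 1 := by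
  have hlength : (r + δ - 1) * ρ = (lrcGenerator α ρ δ).natDegree + (r * ρ - 1) := by
    have hpos : 0 < r * ρ := Nat.mul_pos hr hρ
    have hsplit : (r + δ - 1) * ρ = r * ρ + (δ - 1) * ρ := by
      rw [Nat.add_sub_assoc hδ, add_mul]
    rw [natDegree_lrcGenerator α hρ]
    omega
  rw [hlength]
  exact finrank_cyclicCode (monic_lrcGenerator α hρ).ne_zero _

theorem eval_vecPoly_column_eq_zero_of_mem {v : Fin (N * ρ) → F}
    (hv : v ∈ cyclicCode F (N * ρ) (lrcGenerator α ρ δ)) (a : Fin ρ) {i : ℕ} (hi : 0 < i)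
    (hiδ : i < δ) : (vecPoly (column v a)).eval (α ^ i) = 0 :=
  eval_vecPoly_column_eq_zero ((X_pow_sub_C_pow_dvd_lrcGenerator α hi hiδ).trans hv) a

theorem pred_lt_wt_column_of_mem (hα : IsPrimitiveRoot α N) {v : Fin (N * ρ) → F}
    (hv : v ∈ cyclicCode F (N * ρ) (lrcGenerator α ρ δ)) {a : Fin ρ} (ha : column v a ≠ 0) :
    δ - 1 < wt (column v a) :=
  lt_wt_of_eval_pow_eq_zero (s := 1) hα ha fun _ _ =>
    eval_vecPoly_column_eq_zero_of_mem hv a (by omega) (by omega)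

theorem lt_wt_column_of_mem_of_forall_ne (hα : IsPrimitiveRoot α N) {v : Fin (N * ρ) → F}
    (hv : v ∈ cyclicCode F (N * ρ) (lrcGenerator α ρ δ)) {a : Fin ρ} (ha : column v a ≠ 0)
    (hunique : ∀ b ≠ a, column v b = 0) : δ < wt (column v a) := by
  have heval : (vecPoly (column v a)).eval 1 = 0 := by
    have hroot : (vecPoly v).eval 1 = 0 :=
      eval_eq_zero_of_dvd_of_eval_eq_zero hv (by simp [lrcGenerator])
    rw [vecPoly_eq_sum_column, Finset.sum_eq_single a
      (fun b _ hb => by rw [vecPoly_eq_zero_iff.mpr (hunique b hb)]; simp) (by simp)] at hroot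
    simpa [expand_eval] using hroot
  refine lt_wt_of_eval_pow_eq_zero (s := 0) hα ha fun j hj => ?_
  rw [zero_add]
  obtain rfl | hj0 := j.eq_zero_or_pos
  · simpa using heval
  · exact eval_vecPoly_column_eq_zero_of_mem hv a hj0 hj

theorem minDistGe_cyclicCode_lrcGenerator (hα : IsPrimitiveRoot α N) :
    MinDistGe (cyclicCode F (N * ρ) (lrcGenerator α ρ δ) : Set (Fin (N * ρ) → F)) (δ + 1) := by
  intro v hv hv0
  obtain ⟨a, ha⟩ := exists_column_ne_zero hv0
  rw [wt_eq_sum_wt_column]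
  by_cases hunique : ∀ b ≠ a, column v b = 0
  · exact (lt_wt_column_of_mem_of_forall_ne hα hv ha hunique).trans_le
      (Finset.single_le_sum (f := fun c => wt (column v c)) (fun _ _ => Nat.zero_le _)
        (Finset.mem_univ a))
  · push Not at hunique
    obtain ⟨b, hba, hb⟩ := hunique
    have hpair : wt (column v a) + wt (column v b) ≤ ∑ c, wt (column v c) := by
      rw [← Finset.sum_pair (f := fun c => wt (column v c)) hba.symm]
      exact Finset.sum_le_sum_of_subset (Finset.subset_univ _)
    have hwa := pred_lt_wt_column_of_mem hα hv ha
    have hwb := pred_lt_wt_column_of_mem hα hv hb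
    omega

theorem exists_mem_cyclicCode_lrcGenerator_wt_le (α : F) (hρ : 0 < ρ) (hδ : 0 < δ) (hδN : δ < N) :
    ∃ v ∈ cyclicCode F (N * ρ) (lrcGenerator α ρ δ), v ≠ 0 ∧ wt v ≤ δ + 1 := by
  set p : F[X] := ∏ i ∈ Finset.range δ, (X - C (α ^ i)) with hp
  have hpdeg : p.natDegree = δ := by
    rw [hp, natDegree_finsetProd_X_sub_C_eq_card, Finset.card_range]
  have hne : expand F ρ p ≠ 0 :=
    (expand_ne_zero hρ).mpr (monic_prod_X_sub_C _ _).ne_zero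
  have hdeg : (expand F ρ p).degree < (N * ρ : ℕ) := by
    rw [degree_eq_natDegree hne, natDegree_expand, hpdeg]
    exact Nat.cast_lt.mpr (Nat.mul_lt_mul_of_pos_right hδN hρ)
  have hvec := vecPoly_coeff_of_degree_lt hdeg
  refine ⟨fun i => (expand F ρ p).coeff i, ?_, ?_, ?_⟩
  · change _ ∣ vecPoly _
    rw [hvec]
    exact lrcGenerator_dvd_expand_prod α ρ hδ
  · rwa [← hvec, ne_eq, vecPoly_eq_zero_iff] at hne
  · calc wt (fun i : Fin (N * ρ) => (expand F ρ p).coeff i)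
        ≤ (expand F ρ p).support.card := wt_coeff_le_card_support _ _
      _ ≤ p.support.card := card_support_expand_le hρ p
      _ ≤ δ + 1 := hpdeg ▸ p.card_supp_le_succ_natDegree

theorem minDistIs_cyclicCode_lrcGenerator (hα : IsPrimitiveRoot α N) (hρ : 0 < ρ) (hδ : 0 < δ)
    (hδN : δ < N) :
    MinDistIs (cyclicCode F (N * ρ) (lrcGenerator α ρ δ) : Set (Fin (N * ρ) → F)) (δ + 1) := by
  obtain ⟨v, hv, hv0, hle⟩ := exists_mem_cyclicCode_lrcGenerator_wt_le α hρ hδ hδN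
  have hge := minDistGe_cyclicCode_lrcGenerator (ρ := ρ) (δ := δ) hα
  exact ⟨hge, v, hv, hv0, hle.antisymm (hge v hv hv0)⟩

theorem hasLocality_cyclicCode_lrcGenerator {r : ℕ} (hα : IsPrimitiveRoot α N)
    (hN : N ≤ r + δ - 1) :
    HasLocality (cyclicCode F (N * ρ) (lrcGenerator α ρ δ) : Set (Fin (N * ρ) → F)) r δ :=
  hasLocality_of_le_wt_column hN fun _ hv _ ha =>
    Nat.le_of_pred_lt (pred_lt_wt_column_of_mem hα hv ha)

end

theorem mem_range_algebraMap_of_pow_card_eq_self {F K : Type*} [Field F] [Fintype F] [CommRing K]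
    [IsDomain K] [Algebra F K] {α : K} (h : α ^ Fintype.card F = α) :
    α ∈ Set.range (algebraMap F K) := by
  have hcard := Fintype.one_lt_card (α := F)
  have hsplits : (X ^ Fintype.card F - X : F[X]).Splits := by
    rw [splits_iff_card_roots, FiniteField.roots_X_pow_card_sub_X,
      FiniteField.X_pow_card_sub_X_natDegree_eq F hcard]
    rfl
  exact hsplits.mem_range_of_isRoot (FiniteField.X_pow_card_sub_X_ne_zero F hcard) (by simp [h])

theorem exists_isPrimitiveRoot_algebraMap_eq {F K : Type*} [Field F] [Fintype F] [CommRing K]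
    [IsDomain K] [Algebra F K] {N : ℕ} {α : K} (hα : IsPrimitiveRoot α N)
    (hN : N ∣ Fintype.card F - 1) : ∃ β : F, IsPrimitiveRoot β N ∧ algebraMap F K β = α := by
  have hpow : α ^ Fintype.card F = α := by
    rw [← Nat.sub_add_cancel Fintype.card_pos, pow_succ, (hα.pow_eq_one_iff_dvd _).mpr hN, one_mul]
  obtain ⟨β, rfl⟩ := mem_range_algebraMap_of_pow_card_eq_self hpow
  exact ⟨β, hα.of_map_of_injective (FaithfulSMul.algebraMap_injective F K), rfl⟩

theorem cyclic_LRC_construction_theorem1_general (F : Type*) [Field F] (n r δ : ℕ) (hn : 0 < n)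
    (hr : 2 ≤ r) (hδ : 1 ≤ δ) (hdvd : (r + δ - 1) ∣ n) (ρ : ℕ) (hρ : ρ = n / (r + δ - 1)) (α : F)
    (hα : IsPrimitiveRoot α (r + δ - 1)) :
    lrcGenerator α ρ δ ∣ X ^ n - 1 ∧
      Module.finrank F (cyclicCode F n (lrcGenerator α ρ δ)) = r * ρ - 1 ∧
      MinDistIs (cyclicCode F n (lrcGenerator α ρ δ) : Set (Fin n → F)) (δ + 1) ∧
      HasLocality (cyclicCode F n (lrcGenerator α ρ δ) : Set (Fin n → F)) r δ := by
  obtain rfl : n = (r + δ - 1) * ρ := by rw [hρ, Nat.mul_div_cancel' hdvd]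
  have hρ0 : 0 < ρ := Nat.pos_of_mul_pos_left hn
  exact ⟨lrcGenerator_dvd_X_pow_sub_one α hα ρ hδ (by omega),
    finrank_cyclicCode_lrcGenerator hρ0 (by omega) hδ,
    minDistIs_cyclicCode_lrcGenerator hα hρ0 hδ (by omega),
    hasLocality_cyclicCode_lrcGenerator hα le_rfl⟩

/-- Explicit construction of Theorem 1: with `ρ = n/(r+δ-1)`, `ξ` a primitive `n`-th root
of unity in the splitting field of `X^n - 1` over `F_q`, and `α = ξ^ρ`, the polynomial
`g(x) = (x-1)·∏_{i=1}^{δ-1}(x^ρ - α^i)` has coefficients in `F_q`, divides `x^n - 1`, and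
the `q`-ary cyclic code with generator polynomial `g` has dimension `rρ - 1`, minimum
distance exactly `δ + 1`, and `(r,δ)`-locality. -/
theorem cyclic_LRC_construction_theorem1 (F K : Type*) [Field F] [Fintype F]
    [Field K] [Algebra F K]
    (q n r δ : ℕ) (hq : Fintype.card F = q) (hn : 0 < n) (hcop : Nat.Coprime n q)
    (hr : 2 ≤ r) (hδ : 2 ≤ δ) (hdvd : (r + δ - 1) ∣ Nat.gcd n (q - 1))
    (ρ : ℕ) (hρ : ρ = n / (r + δ - 1))
    (ξ : K) (hξ : IsPrimitiveRoot ξ n) (α : K) (hα : α = ξ ^ ρ) :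
    ∃ g : F[X],
      g.map (algebraMap F K)
        = (X - 1) * ∏ i ∈ Finset.Icc 1 (δ - 1), (X ^ ρ - C (α ^ i)) ∧
      g ∣ X ^ n - 1 ∧
      Module.finrank F (cyclicCode F n g) = r * ρ - 1 ∧
      MinDistIs ((cyclicCode F n g : Submodule F (Fin n → F)) : Set (Fin n → F)) (δ + 1) ∧
      HasLocality ((cyclicCode F n g : Submodule F (Fin n → F)) : Set (Fin n → F)) r δ := by
  obtain ⟨hNn, hNq⟩ := Nat.dvd_gcd_iff.mp hdvd
  have hαN : IsPrimitiveRoot α (r + δ - 1) :=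
    hα ▸ hξ.pow hn (hρ ▸ (Nat.div_mul_cancel hNn).symm)
  obtain ⟨β, hβ, rfl⟩ := exists_isPrimitiveRoot_algebraMap_eq (F := F) hαN (hq ▸ hNq)
  exact ⟨lrcGenerator β ρ δ, map_lrcGenerator _ β ρ δ,
    cyclic_LRC_construction_theorem1_general F n r δ hn hr (by omega) hNn ρ hρ β hβ⟩
end
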